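/- Let G = G(X,Y) be a balanced bipartite graph of order 2n with parts X and Y, |X| = |Y| = n ≥ 16, whose bipartite toughness satisfies t^B(G) ≥ 1. If ρ(G) ≥ ρ(G_{n,n}), then G contains a Hamilton cycle, unless G is isomorphic to G_{n,n}. -/

import Mathlib

open SimpleGraph

/-- The number of connected components of `G - S`. -/
noncomputable def numComp {V : Type*} (G : SimpleGraph V) (S : Set V) : ℕ :=
  Nat.card (SimpleGraph.ConnectedComponent (SimpleGraph.induce Sᶜ G))

/-- `X, Y` form a bipartition of the graph `G`. -/
def IsBipartition {V : Type*} (G : SimpleGraph V) (X Y : Set V) : Prop :=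
  X ∪ Y = Set.univ ∧ Disjoint X Y ∧
    ∀ ⦃u v⦄, G.Adj u v → (u ∈ X ∧ v ∈ Y) ∨ (u ∈ Y ∧ v ∈ X)

/-- The bipartite toughness of `G` (with parts `X`, `Y`) is at least `1`:
`c(G - S) ≤ |S|` for every proper subset `S ⊂ X` (or `S ⊂ Y`) with `c(G - S) > 1`. -/
def BTough1 {V : Type*} (G : SimpleGraph V) (X Y : Set V) : Prop :=
  ∀ S : Set V, (S ⊂ X ∨ S ⊂ Y) → 1 < numComp G S → numComp G S ≤ S.ncard

/-- The toughness of a (non-complete) graph `G`. -/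
noncomputable def toughness {V : Type*} (G : SimpleGraph V) : ℝ :=
  sInf {x : ℝ | ∃ S : Set V, 1 < numComp G S ∧ x = (S.ncard : ℝ) / (numComp G S : ℝ)}

/-- The spectral radius of `G`: the largest eigenvalue of its adjacency matrix. -/
noncomputable def specRad {V : Type*} [Fintype V] (G : SimpleGraph V) : ℝ :=
  letI := Classical.decRel G.Adj
  sSup {μ : ℝ | Module.End.HasEigenvalue (Matrix.mulVecLin (G.adjMatrix ℝ)) μ}

/-- `G` has a 2-factor: a spanning subgraph in which every vertex has degree 2. -/
def Has2Factor {V : Type*} (G : SimpleGraph V) : Prop :=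
  ∃ F : SimpleGraph V, F ≤ G ∧ ∀ v, (F.neighborSet v).ncard = 2

/-- The graph `G_{n,n}`: parts `X = {u_1,…,u_n}` (left) and `Y = {v_1,…,v_n}` (right);
`u_i ~ v_j` for all `i` and all `j ≥ 4`; moreover `v_1, v_2, v_3` are joined to `u_1`,
and `v_i` is joined to `u_{i+1}` for `1 ≤ i ≤ 3` (indices here are 0-based). -/
def Gnn (n : ℕ) : SimpleGraph (Fin n ⊕ Fin n) :=
  SimpleGraph.fromRel fun a b =>
    match a, b with
    | Sum.inl i, Sum.inr j =>
        3 ≤ (j : ℕ) ∨ ((j : ℕ) < 3 ∧ ((i : ℕ) = 0 ∨ (i : ℕ) = (j : ℕ) + 1))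
    | _, _ => False

/-- The graph `M_n`: the complete graph on `{v_1,…,v_{n-3}}` (the vertices of index `< n-3`),
together with three vertices `u_1, u_2, u_3` (the vertices of index `≥ n-3`), each joined to
`v_1` (index `0`), and `u_i` joined to `v_{i+1}` for `1 ≤ i ≤ 3`. -/
def Mn (n : ℕ) : SimpleGraph (Fin n) :=
  SimpleGraph.fromRel fun a b =>
    ((a : ℕ) < n - 3 ∧ (b : ℕ) < n - 3) ∨
      (n - 3 ≤ (a : ℕ) ∧ ((b : ℕ) = 0 ∨ (b : ℕ) = (a : ℕ) - (n - 3) + 1))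

/-- Two completely joined lists of equal length can be interleaved to a chain of adjacent
vertices. -/
lemma exists_list_adj_chain {V : Type*} {G : SimpleGraph V} (lx ly : List V)
    (hlen : lx.length = ly.length)
    (hadj : ∀ a ∈ lx, ∀ b ∈ ly, G.Adj a b) :
    ∃ l : List V, l.Perm (lx ++ ly) ∧ l.IsChain G.Adj ∧
      (∀ a ∈ l.head?, a ∈ lx) ∧ ∀ b ∈ l.getLast?, b ∈ ly := by
  induction lx generalizing ly with
  | nil =>
    obtain rfl : ly = [] := by simpa using hlen.symm
    exact ⟨[], by simp⟩
  | cons a lx ih =>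
    obtain _ | ⟨b, ly⟩ := ly
    · simp at hlen
    obtain ⟨l, hperm, hchain, hhead, hlast⟩ := ih ly (by simpa using hlen)
      fun a' ha' b' hb' => hadj a' (by simp [ha']) b' (by simp [hb'])
    refine ⟨a :: b :: l, ?_, ?_, by simp, ?_⟩
    · calc (a :: b :: l).Perm (a :: b :: (lx ++ ly)) := by simpa using hperm
        _ |>.Perm (a :: (lx ++ b :: ly)) := by simpa using List.perm_middle.symm
    · refine .cons_cons (hadj a (by simp) b (by simp)) ?_
      rw [List.isChain_cons]
      exact ⟨fun c hc => (hadj c (by simp [hhead c hc]) b (by simp)).symm, hchain⟩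
    · intro c hc
      cases l with
      | nil => simp_all
      | cons d l =>
        rw [List.getLast?_cons_cons, List.getLast?_cons_cons] at hc
        simp [hlast c hc]

section Hamiltonicity

variable {V : Type*} [Fintype V] [DecidableEq V] {G : SimpleGraph V}

/-- A Hamiltonian path whose ends are adjacent closes up to a Hamiltonian cycle. -/
lemma SimpleGraph.Walk.IsHamiltonian.isHamiltonian_of_adj {x y : V} {p : G.Walk x y}
    (hp : p.IsHamiltonian) (hcard : 3 ≤ Fintype.card V) (h : G.Adj y x) : G.IsHamiltonian := by
  intro _
  refine ⟨y, .cons h p, ?_⟩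
  rw [Walk.isHamiltonianCycle_isCycle_and_isHamiltonian_tail,
    Walk.isCycle_iff_isPath_tail_and_le_length]
  have hlen := hp.length_eq
  have htail : (Walk.cons h p).tail.IsHamiltonian := by
    simpa [Walk.IsHamiltonian] using hp
  exact ⟨⟨htail.isPath, by simp; omega⟩, htail⟩

lemma isHamiltonian_of_list {l : List V} (hne : l ≠ []) (hnd : l.Nodup) (hmem : ∀ v, v ∈ l)
    (hchain : l.IsChain G.Adj) (hclose : G.Adj (l.getLast hne) (l.head hne))
    (hcard : 3 ≤ Fintype.card V) : G.IsHamiltonian := by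
  have hp : (Walk.ofSupport l hne hchain).IsHamiltonian := by
    intro a
    rw [Walk.support_ofSupport]
    exact List.count_eq_one_of_mem hnd (hmem a)
  exact hp.isHamiltonian_of_adj hcard hclose

/-- A balanced complete bipartite graph on at least three vertices is Hamiltonian. -/
lemma isHamiltonian_of_complete_bipartite {X Y : Finset V} (hXY : Disjoint X Y)
    (huniv : ∀ v, v ∈ X ∨ v ∈ Y) (hcard : X.card = Y.card) (h3 : 3 ≤ Fintype.card V)
    (hadj : ∀ a ∈ X, ∀ b ∈ Y, G.Adj a b) : G.IsHamiltonian := by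
  obtain ⟨l, hperm, hchain, hhead, hlast⟩ := exists_list_adj_chain (G := G) X.toList Y.toList
    (by simpa using hcard) (by simpa using hadj)
  have hmem : ∀ v, v ∈ l := fun v => by
    rw [hperm.mem_iff]; simpa using huniv v
  have hne : l ≠ [] := by
    rintro rfl
    obtain ⟨v⟩ : Nonempty V := Fintype.card_pos_iff.1 (by omega)
    simpa using hmem v
  refine isHamiltonian_of_list hne ?_ hmem hchain ?_ h3
  · rw [hperm.nodup_iff, List.nodup_append]
    refine ⟨X.nodup_toList, Y.nodup_toList, ?_⟩
    intro a ha b hb hab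
    subst hab
    exact Finset.disjoint_left.1 hXY (by simpa using ha) (by simpa using hb)
  · refine (hadj _ ?_ _ ?_).symm
    · simpa using hhead (l.head hne) (List.head_mem_head? hne)
    · simpa using hlast (l.getLast hne) (List.getLast_mem_getLast? hne)

/-- If adding the edge `xy` creates a Hamiltonian cycle, then `x` and `y` are the ends of a
Hamiltonian path. -/
lemma exists_isHamiltonian_walk_of_sup_edge {x y : V} (hxy : x ≠ y) (hG : ¬ G.IsHamiltonian)
    (h : (G ⊔ edge x y).IsHamiltonian) : ∃ p : G.Walk x y, p.IsHamiltonian := by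
  have : Nontrivial V := ⟨x, y, hxy⟩
  obtain ⟨c, hc⟩ := h.exists_isHamiltonianCycle x
  have key : ∀ c : (G ⊔ edge x y).Walk x x, c.IsHamiltonianCycle → c.snd = y →
      ∃ p : G.Walk x y, p.IsHamiltonian := by
    intro c hc hsnd
    cases c with
    | nil => exact absurd hc.isCycle (by simp)
    | cons hadj p =>
      simp only [Walk.snd_cons] at hsnd
      subst hsnd
      have hp := ((Walk.cons_isCycle_iff _ _).1 hc.isCycle).2
      have hham : p.IsHamiltonian := by
        simpa [Walk.IsHamiltonian] using hc.isHamiltonian_tail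
      have hE : ∀ e ∈ p.edges, e ∈ G.edgeSet := by
        intro e he
        have := p.edges_subset_edgeSet he
        induction e with | _ a b =>
        simp only [mem_edgeSet, sup_adj, edge_adj] at this ⊢
        rcases this with h | ⟨⟨rfl, rfl⟩ | ⟨rfl, rfl⟩, _⟩
        · exact h
        · exact absurd he hp
        · exact absurd (Sym2.eq_swap ▸ he) hp
      refine ⟨(p.transfer G hE).reverse, ?_⟩
      intro a
      simpa using hham a
  by_cases hmem : s(x, y) ∈ c.edges
  · have hy : y ∈ c.toSubgraph.neighborSet x := by
      simpa [Walk.adj_toSubgraph_iff_mem_edges] using hmem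
    rw [hc.isCycle.neighborSet_toSubgraph_endpoint] at hy
    rcases hy with hy | hy
    · exact key c hc hy.symm
    · refine key c.reverse ?_ (by simpa using hy.symm)
      rw [Walk.isHamiltonianCycle_iff_isCycle_and_length_eq]
      exact ⟨hc.isCycle.reverse, by simpa using hc.length_eq⟩
  · refine absurd (fun _ => ?_) hG
    have hE : ∀ e ∈ c.edges, e ∈ G.edgeSet := by
      intro e he
      have := c.edges_subset_edgeSet he
      induction e with | _ a b =>
      simp only [mem_edgeSet, sup_adj, edge_adj] at this ⊢
      rcases this with h | ⟨⟨rfl, rfl⟩ | ⟨rfl, rfl⟩, _⟩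
      · exact h
      · exact absurd he hmem
      · exact absurd (Sym2.eq_swap ▸ he) hmem
    refine ⟨x, c.transfer G hE, ?_⟩
    rw [Walk.isHamiltonianCycle_iff_isCycle_and_length_eq]
    exact ⟨hc.isCycle.transfer hE, by simpa using hc.length_eq⟩

/-- Along a Hamiltonian path from `x` to `y` in a non-Hamiltonian graph, the predecessor of a
neighbour of `x` is never a neighbour of `y`. -/
lemma SimpleGraph.Walk.IsHamiltonian.exists_predecessor {x y : V} {p : G.Walk x y}
    (hp : p.IsHamiltonian) (hG : ¬ G.IsHamiltonian) (hcard : 3 ≤ Fintype.card V) :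
    ∃ g : V → V, Set.InjOn g {x}ᶜ ∧ (∀ q, q ≠ x → G.Adj (g q) q) ∧
      ∀ q, q ≠ x → G.Adj x q → ¬ G.Adj y (g q) := by
  have hsplit : ∀ q, ∃ u, q ≠ x → ∃ A B, p.support = A ++ u :: q :: B := by
    intro q
    by_cases hq : q = x
    · exact ⟨x, fun h => absurd hq h⟩
    obtain ⟨A, B, hAB⟩ := List.append_of_mem (hp.mem_support q)
    rcases List.eq_nil_or_concat A with rfl | ⟨A', u, rfl⟩
    · have hx : p.support.head p.support_ne_nil = x := p.head_support
      simp only [hAB] at hx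
      exact absurd hx hq
    · exact ⟨u, fun _ => ⟨A', B, by simp [hAB]⟩⟩
  choose g hg using hsplit
  have hnd := hp.isPath.support_nodup
  have hch := p.isChain_adj_support
  refine ⟨g, ?_, ?_, ?_⟩
  · intro q hq q' hq' hqq
    obtain ⟨A, B, h⟩ := hg q hq
    obtain ⟨A', B', h'⟩ := hg q' hq'
    rw [h] at h'
    rw [hqq] at h'
    rw [h, hqq, List.nodup_append] at hnd
    have htail := ((List.append_cons_inj_of_notMem (fun hm => hnd.2.2 _ hm _ (by simp) rfl)
      (List.nodup_cons.1 hnd.2.1).1).1 h').2.2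
    exact (List.cons.inj htail).1
  · intro q hq
    obtain ⟨A, B, h⟩ := hg q hq
    rw [h] at hch
    have := hch.right_of_append
    exact (List.isChain_cons_cons.1 this).1
  · intro q hq hxq hyg
    obtain ⟨A, B, h⟩ := hg q hq
    apply hG
    have hx : p.support.head p.support_ne_nil = x := p.head_support
    have hy : p.support.getLast p.support_ne_nil = y := p.getLast_support
    simp only [h] at hx hy
    rw [h] at hch hnd
    have h1 : (A ++ [g q]).IsChain G.Adj := by
      have : (A ++ [g q]) ++ (q :: B) = A ++ g q :: q :: B := by simp
      rw [← this] at hch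
      exact hch.left_of_append
    have h2 : (q :: B).IsChain G.Adj := by
      have : (A ++ [g q]) ++ (q :: B) = A ++ g q :: q :: B := by simp
      rw [← this] at hch
      exact hch.right_of_append
    have hperm : ((A ++ [g q]) ++ (q :: B).reverse).Perm (A ++ g q :: q :: B) := by
      have : A ++ g q :: q :: B = (A ++ [g q]) ++ (q :: B) := by simp
      rw [this]
      exact List.Perm.append_left _ (List.reverse_perm _)
    refine isHamiltonian_of_list (l := (A ++ [g q]) ++ (q :: B).reverse) (by simp)
      (hperm.nodup_iff.2 hnd) (fun v => hperm.mem_iff.2 (h ▸ hp.mem_support v)) ?_ ?_ hcard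
    · rw [List.isChain_append]
      refine ⟨h1, ?_, ?_⟩
      · rw [List.isChain_reverse]
        exact h2.imp fun a b hab => hab.symm
      · intro a ha b hb
        obtain rfl : g q = a := by simpa using ha
        have : b = y := by
          rw [List.head?_reverse, List.getLast?_eq_some_getLast (List.cons_ne_nil q B)] at hb
          rw [← hy]
          simpa using hb.symm
        subst this
        exact hyg.symm
    · have e1 : ((A ++ [g q]) ++ (q :: B).reverse).head (by simp) = x := by
        rw [← hx]
        cases A <;> simp
      have e2 : ((A ++ [g q]) ++ (q :: B).reverse).getLast (by simp) = q := by
        simp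
      rw [e1, e2]
      exact hxq.symm

end Hamiltonicity

section Spectral

variable {V : Type*} {G H : SimpleGraph V}

lemma isHermitian_adjMatrix (G : SimpleGraph V) [DecidableRel G.Adj] :
    (G.adjMatrix ℝ).IsHermitian := by
  ext i j
  simp [adjMatrix_apply, G.adj_comm]

variable [Fintype V]

lemma specRad_eq (G : SimpleGraph V) [DecidableRel G.Adj] :
    specRad G = sSup {μ : ℝ | Module.End.HasEigenvalue (Matrix.mulVecLin (G.adjMatrix ℝ)) μ} := by
  unfold specRad
  congr!

lemma hasEigenvalue_mulVecLin_iff {A : Matrix V V ℝ} {μ : ℝ} :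
    Module.End.HasEigenvalue (Matrix.mulVecLin A) μ ↔ ∃ z : V → ℝ, z ≠ 0 ∧ A.mulVec z = μ • z := by
  constructor
  · intro h
    obtain ⟨z, hz⟩ := h.exists_hasEigenvector
    exact ⟨z, hz.2, by simpa using hz.apply_eq_smul⟩
  · rintro ⟨z, hz, h⟩
    exact Module.End.hasEigenvalue_of_hasEigenvector
      (Module.End.hasEigenvector_iff.2 ⟨Module.End.mem_eigenspace_iff.2 (by simpa using h), hz⟩)

lemma le_specRad [DecidableRel G.Adj] {μ : ℝ} {z : V → ℝ} (hz : z ≠ 0)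
    (h : (G.adjMatrix ℝ).mulVec z = μ • z) : μ ≤ specRad G := by
  rw [specRad_eq]
  exact le_csSup (Module.End.finite_hasEigenvalue _).bddAbove
    (hasEigenvalue_mulVecLin_iff.2 ⟨z, hz, h⟩)

variable [DecidableEq V]

/-- The spectral radius is attained by an eigenvector. -/
lemma exists_eigenvector_specRad [Nonempty V] (G : SimpleGraph V) [DecidableRel G.Adj] :
    ∃ z : V → ℝ, z ≠ 0 ∧ (G.adjMatrix ℝ).mulVec z = specRad G • z := by
  rw [← hasEigenvalue_mulVecLin_iff, specRad_eq]
  refine Set.Nonempty.csSup_mem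
    (s := {μ : ℝ | Module.End.HasEigenvalue (Matrix.mulVecLin (G.adjMatrix ℝ)) μ}) ?_
    (Module.End.finite_hasEigenvalue _)
  have hA := isHermitian_adjMatrix G
  obtain ⟨i⟩ := ‹Nonempty V›
  refine ⟨hA.eigenvalues i, hasEigenvalue_mulVecLin_iff.2 ⟨_, ?_, hA.mulVec_eigenvectorBasis i⟩⟩
  intro h
  exact hA.eigenvectorBasis.toBasis.ne_zero i (by ext j; simpa using congrFun h j)

lemma posSemidef_specRad_smul_one_sub (G : SimpleGraph V) [DecidableRel G.Adj] :
    (specRad G • (1 : Matrix V V ℝ) - G.adjMatrix ℝ).PosSemidef := by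
  have hB : (specRad G • (1 : Matrix V V ℝ) - G.adjMatrix ℝ).IsHermitian := by
    refine Matrix.IsHermitian.sub ?_ (isHermitian_adjMatrix G)
    ext i j
    simp [Matrix.one_apply, eq_comm]
  rw [hB.posSemidef_iff_eigenvalues_nonneg]
  intro i
  have h := hB.mulVec_eigenvectorBasis i
  rw [Matrix.sub_mulVec, Matrix.smul_mulVec, Matrix.one_mulVec] at h
  have h' : (G.adjMatrix ℝ).mulVec (hB.eigenvectorBasis i) =
      (specRad G - hB.eigenvalues i) • (hB.eigenvectorBasis i : V → ℝ) := by
    rw [sub_smul, ← h, sub_sub_cancel]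
  have := le_specRad (fun h0 => hB.eigenvectorBasis.toBasis.ne_zero i
    (by ext j; simpa using congrFun h0 j)) h'
  simp only [Pi.zero_apply]
  linarith

lemma dotProduct_adjMatrix_mulVec_le [DecidableRel G.Adj] (z : V → ℝ) :
    z ⬝ᵥ (G.adjMatrix ℝ).mulVec z ≤ specRad G * (z ⬝ᵥ z) := by
  have h := (posSemidef_specRad_smul_one_sub G).dotProduct_mulVec_nonneg z
  rw [Matrix.sub_mulVec, Matrix.smul_mulVec, Matrix.one_mulVec, dotProduct_sub,
    dotProduct_smul, star_trivial, smul_eq_mul] at h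
  linarith

lemma specRad_nonneg [Nonempty V] (G : SimpleGraph V) : 0 ≤ specRad G := by
  classical
  obtain ⟨v⟩ := ‹Nonempty V›
  simpa [adjMatrix_apply] using dotProduct_adjMatrix_mulVec_le (G := G) (Pi.single v 1)

/-- A maximiser of the Rayleigh quotient is an eigenvector. -/
lemma adjMatrix_mulVec_eq_of_specRad_le [DecidableRel G.Adj] {z : V → ℝ}
    (hz : specRad G * (z ⬝ᵥ z) ≤ z ⬝ᵥ (G.adjMatrix ℝ).mulVec z) :
    (G.adjMatrix ℝ).mulVec z = specRad G • z := by
  have h := ((posSemidef_specRad_smul_one_sub G).dotProduct_mulVec_zero_iff z).1 (by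
    rw [Matrix.sub_mulVec, Matrix.smul_mulVec, Matrix.one_mulVec, dotProduct_sub,
      dotProduct_smul, star_trivial, smul_eq_mul]
    linarith [dotProduct_adjMatrix_mulVec_le (G := G) z])
  rw [Matrix.sub_mulVec, Matrix.smul_mulVec, Matrix.one_mulVec, sub_eq_zero] at h
  exact h.symm

lemma specRad_le_of_iso {W : Type*} [Fintype W] [DecidableEq W] {G' : SimpleGraph W} [Nonempty V]
    (e : G ≃g G') : specRad G ≤ specRad G' := by
  classical
  obtain ⟨z, hz, h⟩ := exists_eigenvector_specRad G
  refine le_specRad (z := z ∘ e.symm) ?_ ?_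
  · intro h0
    apply hz
    ext v
    simpa using congrFun h0 (e v)
  · ext w
    have := congrFun h (e.symm w)
    rw [Matrix.mulVec, dotProduct] at this ⊢
    rw [← e.toEquiv.sum_comp]
    simp only [adjMatrix_apply, Pi.smul_apply, Function.comp_apply] at this ⊢
    rw [← this]
    refine Finset.sum_congr rfl fun v _ => ?_
    have hiff : G'.Adj w (e v) ↔ G.Adj (e.symm w) v := by
      rw [← e.map_adj_iff]; simp
    simp [hiff]

/-- The spectral radius is strictly monotone below a connected graph. -/
lemma eq_of_le_of_specRad_le (hle : G ≤ H) (hconn : H.Preconnected)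
    [Nonempty V] (hrho : specRad H ≤ specRad G) : G = H := by
  classical
  obtain ⟨z, hz, h⟩ := exists_eigenvector_specRad G
  set w : V → ℝ := fun v => |z v| with hw
  have hww : w ⬝ᵥ w = z ⬝ᵥ z := by simp [dotProduct, hw]
  have hzz : 0 ≤ z ⬝ᵥ z := Finset.sum_nonneg fun v _ => mul_self_nonneg (z v)
  have quad : ∀ (K : SimpleGraph V) (y : V → ℝ), y ⬝ᵥ (K.adjMatrix ℝ).mulVec y =
      ∑ u, ∑ v, if K.Adj u v then y u * y v else 0 := by
    intro K y
    simp only [dotProduct, Matrix.mulVec, Finset.mul_sum, adjMatrix_apply]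
    refine Finset.sum_congr rfl fun u _ => Finset.sum_congr rfl fun v _ => ?_
    split_ifs <;> simp
  have h1 : z ⬝ᵥ (G.adjMatrix ℝ).mulVec z = specRad G * (z ⬝ᵥ z) := by
    rw [h, dotProduct_smul, smul_eq_mul]
  have h2 : z ⬝ᵥ (G.adjMatrix ℝ).mulVec z ≤ w ⬝ᵥ (G.adjMatrix ℝ).mulVec w := by
    rw [quad, quad]
    gcongr with u _ v _
    split_ifs
    · simpa [hw, abs_mul] using le_abs_self (z u * z v)
    · rfl
  have hterm : ∀ u v, (if G.Adj u v then w u * w v else 0) ≤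
      if H.Adj u v then w u * w v else 0 := by
    intro u v
    have h0 : 0 ≤ w u * w v := mul_nonneg (abs_nonneg _) (abs_nonneg _)
    by_cases hG : G.Adj u v
    · simp [hG, hle hG]
    · simp only [hG, if_false]
      split_ifs <;> simp [h0]
  have h3 : w ⬝ᵥ (G.adjMatrix ℝ).mulVec w ≤ w ⬝ᵥ (H.adjMatrix ℝ).mulVec w := by
    rw [quad, quad]
    exact Finset.sum_le_sum fun u _ => Finset.sum_le_sum fun v _ => hterm u v
  have h4 := dotProduct_adjMatrix_mulVec_le (G := H) w
  have h5 : specRad H * (z ⬝ᵥ z) ≤ specRad G * (z ⬝ᵥ z) :=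
    mul_le_mul_of_nonneg_right hrho hzz
  rw [hww] at h4
  have heig := adjMatrix_mulVec_eq_of_specRad_le (G := H) (z := w) (by rw [hww]; linarith)
  have hzero : ∀ u v, H.Adj u v → w u = 0 → w v = 0 := by
    intro u v huv hu
    have := congrFun heig u
    simp only [Matrix.mulVec, dotProduct, adjMatrix_apply, Pi.smul_apply, hu, smul_zero] at this
    rw [Finset.sum_eq_zero_iff_of_nonneg] at this
    · simpa [huv] using this v (Finset.mem_univ v)
    · intro v _
      split_ifs <;> simp [hw]
  have hpos : ∀ v, 0 < w v := by
    intro v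
    refine lt_of_le_of_ne (abs_nonneg _) fun hv => hz ?_
    ext u
    obtain ⟨p⟩ := hconn v u
    have : ∀ {a b : V} (p : H.Walk a b), w a = 0 → w b = 0 := by
      intro a b p
      induction p with
      | nil => exact id
      | cons hadj _ ih => exact fun ha => ih (hzero _ _ hadj ha)
    simpa [hw] using this p hv.symm
  have heq : w ⬝ᵥ (G.adjMatrix ℝ).mulVec w = w ⬝ᵥ (H.adjMatrix ℝ).mulVec w := by linarith
  rw [quad, quad, Finset.sum_eq_sum_iff_of_le
    fun u _ => Finset.sum_le_sum fun v _ => hterm u v] at heq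
  refine le_antisymm hle fun u v huv => ?_
  have huv' := (Finset.sum_eq_sum_iff_of_le fun v _ => hterm u v).1
    (heq u (Finset.mem_univ u)) v (Finset.mem_univ v)
  by_contra hG
  simp only [hG, huv, if_true, if_false] at huv'
  exact (mul_pos (hpos u) (hpos v)).ne huv'

end Spectral

section BipartiteSpectral

variable {V : Type*} {G : SimpleGraph V}

lemma IsBipartition.symm {X Y : Set V} (h : IsBipartition G X Y) : IsBipartition G Y X :=
  ⟨by rw [Set.union_comm]; exact h.1, h.2.1.symm, fun _ _ hadj => (h.2.2 hadj).symm⟩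

lemma IsBipartition.mem_or_mem {X Y : Set V} (h : IsBipartition G X Y) (v : V) :
    v ∈ X ∨ v ∈ Y := by
  have : v ∈ X ∪ Y := h.1 ▸ Set.mem_univ v
  exact this

lemma IsBipartition.mem_right {X Y : Set V} (h : IsBipartition G X Y) {u v : V}
    (hu : u ∈ X) (hadj : G.Adj u v) : v ∈ Y :=
  (h.2.2 hadj).elim (·.2) fun h' => (h.2.1.ne_of_mem hu h'.1 rfl).elim

variable [Fintype V]

/-- Cauchy–Schwarz applied to the eigenvalue equation at the vertices of one part. -/
lemma sum_sq_eigenvector_le [DecidableRel G.Adj] {X Y : Finset V}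
    (hbip : IsBipartition G (X : Set V) Y) {z : V → ℝ} {μ : ℝ}
    (h : (G.adjMatrix ℝ).mulVec z = μ • z) :
    μ ^ 2 * ∑ x ∈ X, z x ^ 2 ≤
      (∑ x ∈ X, (Y.filter (G.Adj x)).card : ℕ) * ∑ y ∈ Y, z y ^ 2 := by
  rw [Finset.mul_sum, Nat.cast_sum, Finset.sum_mul]
  refine Finset.sum_le_sum fun x hx => ?_
  have hx' : μ * z x = ∑ y ∈ Y.filter (G.Adj x), z y := by
    have := congrFun h x
    simp only [adjMatrix_mulVec_apply, Pi.smul_apply, smul_eq_mul] at this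
    rw [← this]
    refine Finset.sum_congr ?_ fun _ _ => rfl
    ext y
    simp only [mem_neighborFinset, Finset.mem_filter]
    exact ⟨fun hy => ⟨by simpa using hbip.mem_right (by simpa using hx) hy, hy⟩, fun hy => hy.2⟩
  rw [← mul_pow, hx']
  refine sq_sum_le_card_mul_sum_sq.trans ?_
  gcongr
  exact Finset.filter_subset _ _

/-- The squared spectral radius of a bipartite graph is at most its number of edges. -/
lemma sq_specRad_le_sum_card [DecidableEq V] [Nonempty V] [DecidableRel G.Adj] {X Y : Finset V}
    (hbip : IsBipartition G (X : Set V) Y) :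
    specRad G ^ 2 ≤ (∑ x ∈ X, (Y.filter (G.Adj x)).card : ℕ) := by
  obtain ⟨z, hz, h⟩ := exists_eigenvector_specRad G
  have h1 := sum_sq_eigenvector_le hbip h
  have h2 := sum_sq_eigenvector_le hbip.symm h
  have hE : ∑ y ∈ Y, (X.filter (G.Adj y)).card = ∑ x ∈ X, (Y.filter (G.Adj x)).card := by
    have := Finset.sum_card_bipartiteAbove_eq_sum_card_bipartiteBelow (s := X) (t := Y) G.Adj
    simp only [Finset.bipartiteAbove, Finset.bipartiteBelow] at this
    rw [this]
    simp only [G.adj_comm]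
  rw [hE] at h2
  have hpos : 0 < ∑ x ∈ X, z x ^ 2 + ∑ y ∈ Y, z y ^ 2 := by
    obtain ⟨v, hv⟩ := Function.ne_iff.1 hz
    have hX : 0 ≤ ∑ x ∈ X, z x ^ 2 := Finset.sum_nonneg fun _ _ => sq_nonneg _
    have hY : 0 ≤ ∑ y ∈ Y, z y ^ 2 := Finset.sum_nonneg fun _ _ => sq_nonneg _
    have hv' : 0 < z v ^ 2 := by simpa [sq_pos_iff] using hv
    rcases hbip.mem_or_mem v with hv | hv
    · have := Finset.single_le_sum (f := fun x => z x ^ 2) (fun _ _ => sq_nonneg _)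
        (Finset.mem_coe.1 hv)
      linarith
    · have := Finset.single_le_sum (f := fun x => z x ^ 2) (fun _ _ => sq_nonneg _)
        (Finset.mem_coe.1 hv)
      linarith
  refine le_of_mul_le_mul_right ?_ hpos
  linarith

lemma Gnn_adj_inl_inr {n : ℕ} {i j : Fin n} : (Gnn n).Adj (Sum.inl i) (Sum.inr j) ↔
    3 ≤ (j : ℕ) ∨ ((j : ℕ) < 3 ∧ ((i : ℕ) = 0 ∨ (i : ℕ) = (j : ℕ) + 1)) := by
  simp [Gnn]

lemma Gnn_not_adj_inl_inl {n : ℕ} {i j : Fin n} : ¬(Gnn n).Adj (Sum.inl i) (Sum.inl j) := by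
  simp [Gnn]

lemma Gnn_not_adj_inr_inr {n : ℕ} {i j : Fin n} : ¬(Gnn n).Adj (Sum.inr i) (Sum.inr j) := by
  simp [Gnn]

lemma Gnn_preconnected {n : ℕ} (hn : 4 ≤ n) : (Gnn n).Preconnected := by
  have h0 : ∀ v, (Gnn n).Reachable v (Sum.inl ⟨0, by omega⟩) := by
    have hr : ∀ j, (Gnn n).Reachable (Sum.inr j) (Sum.inl ⟨0, by omega⟩) := fun j =>
      (Gnn_adj_inl_inr.2 (by simp only [true_or, and_true]; omega)).symm.reachable
    rintro (i | j)
    · exact (Gnn_adj_inl_inr (j := ⟨3, by omega⟩).2 (by simp)).reachable.trans (hr _)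
    · exact hr j
  exact fun u v => (h0 u).trans (h0 v).symm

lemma lt_sq_specRad_Gnn {n : ℕ} (hn : 4 ≤ n) :
    (n : ℝ) * (n - 3) < specRad (Gnn n) ^ 2 := by
  classical
  have hn' : (4 : ℝ) ≤ n := by exact_mod_cast hn
  set a : ℝ := √(n - 3) with ha
  set b : ℝ := √n with hb
  have ha2 : a ^ 2 = n - 3 := Real.sq_sqrt (by linarith)
  have hb2 : b ^ 2 = n := Real.sq_sqrt (by linarith)
  have ha0 : 0 < a := Real.sqrt_pos.2 (by linarith)
  have hb0 : 0 < b := Real.sqrt_pos.2 (by linarith)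
  set z : Fin n ⊕ Fin n → ℝ := Sum.elim (fun _ => a) fun j => if 3 ≤ (j : ℕ) then b else 0 with hz
  have hsum : ∀ c : ℝ, (∑ j : Fin n, if 3 ≤ (j : ℕ) then c else 0) = (n - 3) * c := by
    intro c
    have hlt : (Finset.univ.filter fun j : Fin n => (j : ℕ) < 3).card = min n 3 :=
      Fin.card_filter_val_lt
    have hge := Finset.card_filter_add_card_filter_not (s := (Finset.univ : Finset (Fin n)))
      (fun j : Fin n => (j : ℕ) < 3)
    simp only [not_lt, Finset.card_univ, Fintype.card_fin] at hge
    have hcard : (Finset.univ.filter fun j : Fin n => 3 ≤ (j : ℕ)).card = n - 3 := by omega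
    rw [← Finset.sum_filter, Finset.sum_const, hcard, nsmul_eq_mul, Nat.cast_sub (by omega)]
    norm_num
  have hzz : z ⬝ᵥ z = 2 * n * (n - 3) := by
    simp only [dotProduct, Fintype.sum_sum_type, hz, Sum.elim_inl, Sum.elim_inr, Finset.sum_const,
      Finset.card_univ, Fintype.card_fin, nsmul_eq_mul, ← pow_two, ite_pow, ne_eq,
      OfNat.ofNat_ne_zero, not_false_eq_true, zero_pow, hsum, ha2, hb2]
    ring
  have hinl : ∀ i, ((Gnn n).adjMatrix ℝ).mulVec z (Sum.inl i) = (n - 3) * b := by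
    intro i
    simp only [Matrix.mulVec, dotProduct, Fintype.sum_sum_type, adjMatrix_apply, hz,
      Gnn_not_adj_inl_inl, Gnn_adj_inl_inr, Sum.elim_inl, Sum.elim_inr, if_false, zero_mul,
      Finset.sum_const_zero, zero_add]
    rw [← hsum]
    refine Finset.sum_congr rfl fun j _ => ?_
    by_cases hj : 3 ≤ (j : ℕ) <;> simp [hj]
  have hinr : ∀ j : Fin n, 3 ≤ (j : ℕ) →
      ((Gnn n).adjMatrix ℝ).mulVec z (Sum.inr j) = n * a := by
    intro j hj
    simp [Matrix.mulVec, dotProduct, Fintype.sum_sum_type, adjMatrix_apply, hz,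
      Gnn_not_adj_inr_inr, (Gnn n).adj_comm (Sum.inr j), Gnn_adj_inl_inr, hj]
  have hquad : z ⬝ᵥ ((Gnn n).adjMatrix ℝ).mulVec z = (a * b) * (z ⬝ᵥ z) := by
    rw [hzz, dotProduct, Fintype.sum_sum_type]
    have : ∀ j : Fin n, z (Sum.inr j) * ((Gnn n).adjMatrix ℝ).mulVec z (Sum.inr j) =
        if 3 ≤ (j : ℕ) then b * (n * a) else 0 := by
      intro j
      by_cases hj : 3 ≤ (j : ℕ)
      · rw [hinr j hj]
        simp [hz, hj]
      · simp [hz, hj]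
    have hzl : ∀ i : Fin n, z (Sum.inl i) = a := fun _ => rfl
    simp only [this, hsum, hinl, hzl, Finset.sum_const, Finset.card_univ,
      Fintype.card_fin, nsmul_eq_mul]
    ring
  by_contra! hle
  have hab : specRad (Gnn n) ≤ a * b := by
    refine le_of_abs_le (abs_le_of_sq_le_sq ?_ (by positivity))
    rw [mul_pow, ha2, hb2]
    linarith
  have heig := adjMatrix_mulVec_eq_of_specRad_le (G := Gnn n) (z := z) (by
    rw [hquad]
    refine mul_le_mul_of_nonneg_right hab ?_
    rw [hzz]
    exact mul_nonneg (by positivity) (by linarith))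
  have hzero := congrFun heig (Sum.inr ⟨0, by omega⟩)
  simp only [Matrix.mulVec, dotProduct, adjMatrix_apply, Pi.smul_apply] at hzero
  rw [show z (Sum.inr ⟨0, by omega⟩) = 0 by simp [hz], smul_zero,
    Finset.sum_eq_zero_iff_of_nonneg] at hzero
  · have := hzero (Sum.inl ⟨0, by omega⟩) (Finset.mem_univ _)
    rw [if_pos (Gnn_adj_inl_inr.2 (by simp)).symm] at this
    simp only [hz, Sum.elim_inl, one_mul] at this
    exact ha0.ne' this
  · rintro (i | j) -
    · simp only [hz, Sum.elim_inl]
      split_ifs <;> simp [ha0.le]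
    · simp [Gnn_not_adj_inr_inr]

end BipartiteSpectral

section Toughness

variable {V : Type*} {G : SimpleGraph V} {X Y : Set V}

lemma BTough1.symm (h : BTough1 G X Y) : BTough1 G Y X :=
  fun S hS => h S hS.symm

/-- If all neighbours of a nonempty subset `T` of one part of a `1`-tough bipartite graph lie in a
proper subset `S` of the other part, then `|T| < |S|`: the vertices of `T` are isolated
in `G - S`, and `G - S` has at least one further component. -/
lemma BTough1.ncard_lt_ncard [Finite V] (ht : BTough1 G X Y) (hXY : Disjoint X Y) {S T : Set V}
    (hS : S ⊂ Y) (hTX : T ⊆ X) (hT : T.Nonempty) (hN : ∀ t ∈ T, ∀ v, G.Adj t v → v ∈ S) :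
    T.ncard < S.ncard := by
  obtain ⟨y, hyY, hyS⟩ := Set.exists_of_ssubset hS
  have hTS : ∀ t ∈ T, t ∈ Sᶜ := fun t htT htS => hXY.ne_of_mem (hTX htT) (hS.1 htS) rfl
  have hiso : ∀ (t : V) (htT : t ∈ T) (w : ↥Sᶜ),
      (induce Sᶜ G).Reachable ⟨t, hTS t htT⟩ w → t = w := by
    rintro t htT w ⟨p⟩
    cases p with
    | nil => rfl
    | @cons _ v _ hadj _ => exact absurd (hN t htT v hadj) v.2
  let f : Option T → (induce Sᶜ G).ConnectedComponent := fun o =>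
    o.elim (connectedComponentMk _ ⟨y, hyS⟩) fun t => connectedComponentMk _ ⟨t, hTS t t.2⟩
  have hf : Function.Injective f := by
    have hne : ∀ t : T, (t : V) ≠ y := fun t => hXY.ne_of_mem (hTX t.2) hyY
    rintro (_ | t) (_ | t') h
    · rfl
    · exact (hne t' (hiso t' t'.2 _ (ConnectedComponent.exact h).symm)).elim
    · exact (hne t (hiso t t.2 _ (ConnectedComponent.exact h))).elim
    · exact congrArg some (Subtype.ext (hiso t t.2 _ (ConnectedComponent.exact h)))
  have hcard := Nat.card_le_card_of_injective f hf
  rw [Finite.card_option, Nat.card_coe_set_eq] at hcard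
  have hpos := (Set.ncard_pos (s := T)).2 hT
  exact Nat.lt_of_succ_le (hcard.trans (ht S (Or.inr hS) (by unfold numComp; omega)))

end Toughness

section Structure

variable {V : Type*} {H : SimpleGraph V} {X Y : Finset V}

/-- For non-adjacent `x ∈ X` and `y ∈ Y`, a Hamilton path from `x` to `y` sends each `q ∈ Y` to its
predecessor `g q ∈ X`; closing it up through `x` and `q` must fail. -/
def HasPredecessors (H : SimpleGraph V) (X Y : Finset V) : Prop :=
  ∀ x ∈ X, ∀ y ∈ Y, ¬H.Adj x y → ∃ g : V → V, Set.InjOn g Y ∧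
    (∀ q ∈ Y, g q ∈ X ∧ H.Adj (g q) q) ∧ ∀ q ∈ Y, H.Adj x q → ¬H.Adj y (g q)

/-- Every nonempty subset of `X` not dominating `Y` has more neighbours than elements. -/
def ExpandsInto (H : SimpleGraph V) (X Y : Finset V) : Prop :=
  ∀ S T : Finset V, S ⊂ Y → T ⊆ X → T.Nonempty →
    (∀ t ∈ T, ∀ v ∈ Y, H.Adj t v → v ∈ S) → T.card < S.card

/-- The adjacency pattern of `Gnn`, with `x i` the three vertices of degree two. -/
def HasGnnPattern (H : SimpleGraph V) (X Y : Finset V) : Prop :=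
  ∃ (x b : Fin 3 → V) (a : V), Function.Injective x ∧ Function.Injective b ∧
    (∀ i, x i ∈ X) ∧ a ∈ Y ∧ (∀ i, b i ∈ Y) ∧ (∀ i, b i ≠ a) ∧
    ∀ u ∈ X, ∀ v ∈ Y, H.Adj u v ↔ (∀ i, u ≠ x i) ∨ v = a ∨ ∃ i, u = x i ∧ v = b i

lemma exists_equiv_extend_castLE {k n : ℕ} (hk : k ≤ n) {t : Finset V} (ht : t.card = n)
    {f : Fin k → V} (hf : Function.Injective f) (hft : ∀ i, f i ∈ t) :
    ∃ g : Fin n ≃ t, ∀ i, (g (Fin.castLE hk i) : V) = f i := by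
  classical
  rcases Nat.eq_zero_or_pos k with rfl | hk0
  · exact ⟨(t.equivFinOfCardEq ht).symm, fun i => i.elim0⟩
  have hinj := Fin.castLE_injective hk
  let f' : Fin n → V := Function.extend (Fin.castLE hk) f fun _ => f ⟨0, hk0⟩
  have hf' : ∀ i, f' (Fin.castLE hk i) = f i := fun i => hinj.extend_apply _ _ _
  obtain ⟨g, hg⟩ := Finset.exists_equiv_extend_of_card_eq (t := t) (by simp [ht])
    (s := Finset.univ.image (Fin.castLE hk)) (f := f')
    (by
      intro v hv
      simp only [Finset.mem_image, Finset.mem_univ, true_and, exists_exists_eq_and, hf'] at hv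
      obtain ⟨i, rfl⟩ := hv
      exact hft i)
    (by
      intro i hi j hj hij
      simp only [Finset.coe_image, Finset.coe_univ, Set.image_univ, Set.mem_range] at hi hj
      obtain ⟨i, rfl⟩ := hi
      obtain ⟨j, rfl⟩ := hj
      rw [hf', hf'] at hij
      rw [hf hij])
  exact ⟨g, fun i => by rw [hg _ (by simp), hf']⟩

lemma HasGnnPattern.nonempty_iso {n : ℕ} (hn : 4 ≤ n) (h : HasGnnPattern H X Y)
    (hbip : IsBipartition H (X : Set V) Y) (hX : X.card = n) (hY : Y.card = n) :
    Nonempty (H ≃g Gnn n) := by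
  obtain ⟨x, b, a, hx, hb, hxX, haY, hbY, hba, hadj⟩ := h
  obtain ⟨eX, heX⟩ := exists_equiv_extend_castLE (by omega : 3 ≤ n) hX hx hxX
  obtain ⟨eY, heY⟩ := exists_equiv_extend_castLE (by omega : 4 ≤ n) hY (f := Fin.cons a b)
    (Fin.cons_injective_iff.2 ⟨by rintro ⟨i, hi⟩; exact hba i hi, hb⟩)
    (fun i => by refine Fin.cases ?_ (fun j => ?_) i <;> simp [haY, hbY])
  have hdisj : ∀ i j, (eX i : V) ≠ eY j := fun i j =>
    hbip.2.1.ne_of_mem (eX i).2 (eY j).2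
  have key : ∀ i j : Fin n, H.Adj (eY i) (eX j) ↔ (Gnn n).Adj (Sum.inl i) (Sum.inr j) := by
    intro i j
    rw [H.adj_comm, hadj _ (eX j).2 _ (eY i).2, Gnn_adj_inl_inr]
    have h1 : ∀ k : Fin 3, (eX j : V) = x k ↔ (j : ℕ) = k := fun k => by
      rw [← heX, Subtype.coe_inj, eX.apply_eq_iff_eq, Fin.ext_iff]
      simp
    have h2 : (eY i : V) = a ↔ (i : ℕ) = 0 := by
      rw [← show ((eY (Fin.castLE (by omega) (0 : Fin 4)) : Y) : V) = a from heY 0,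
        Subtype.coe_inj, eY.apply_eq_iff_eq, Fin.ext_iff]
      simp
    have h3 : ∀ k : Fin 3, (eY i : V) = b k ↔ (i : ℕ) = k + 1 := fun k => by
      rw [← show ((eY (Fin.castLE (by omega) k.succ) : Y) : V) = b k by
        rw [heY, Fin.cons_succ], Subtype.coe_inj, eY.apply_eq_iff_eq, Fin.ext_iff]
      simp
    simp only [ne_eq, h1, h2, h3, Fin.forall_fin_succ, Fin.exists_fin_succ]
    simp
    omega
  let f : Fin n ⊕ Fin n → V := Sum.elim (fun i => eY i) fun j => eX j
  have hf : Function.Bijective f := by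
    constructor
    · rintro (i | i) (j | j) hij
      · exact congrArg _ (eY.injective (Subtype.ext hij))
      · exact (hdisj j i hij.symm).elim
      · exact (hdisj i j hij).elim
      · exact congrArg _ (eX.injective (Subtype.ext hij))
    · intro v
      rcases hbip.mem_or_mem v with hv | hv
      · exact ⟨Sum.inr (eX.symm ⟨v, hv⟩), by simp [f]⟩
      · exact ⟨Sum.inl (eY.symm ⟨v, hv⟩), by simp [f]⟩
  refine ⟨RelIso.symm ⟨Equiv.ofBijective f hf, ?_⟩⟩
  rintro (i | i) (j | j)
  · refine iff_of_false (fun hij => ?_) Gnn_not_adj_inl_inl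
    exact hbip.2.1.ne_of_mem (hbip.symm.mem_right (eY i).2 hij) (eY j).2 rfl
  · exact key i j
  · rw [H.adj_comm, (Gnn n).adj_comm]
    exact key j i
  · refine iff_of_false (fun hij => ?_) Gnn_not_adj_inr_inr
    exact hbip.2.1.ne_of_mem (eX j).2 (hbip.mem_right (eX i).2 hij) rfl

variable [DecidableEq V] [DecidableRel H.Adj]

/-- The key structural lemma: if only few vertices of `X` miss a vertex of `Y`, then `H` has the
adjacency pattern of `Gnn`. -/
lemma hasGnnPattern_of_card_le_three (hpred : HasPredecessors H X Y) (hexp : ExpandsInto H X Y)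
    (hcard : (X.filter fun x => ∃ y ∈ Y, ¬H.Adj x y).card ≤ 3)
    (hne : ∃ x ∈ X, ∃ y ∈ Y, ¬H.Adj x y) : HasGnnPattern H X Y := by
  set L := X.filter fun x => ∃ y ∈ Y, ¬H.Adj x y with hL
  have hmemL : ∀ x, x ∈ L ↔ x ∈ X ∧ ∃ y ∈ Y, ¬H.Adj x y := by simp [hL]
  have hLX : L ⊆ X := Finset.filter_subset _ _
  have hLne : L.Nonempty := by
    obtain ⟨x, hx, y, hy, hxy⟩ := hne
    exact ⟨x, (hmemL x).2 ⟨hx, y, hy, hxy⟩⟩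
  have hmissL : ∀ y ∈ Y, ∀ u ∈ X, ¬H.Adj u y → u ∈ L := fun y hy u hu huy =>
    (hmemL u).2 ⟨hu, y, hy, huy⟩
  have hss : ∀ x ∈ L, Y.filter (H.Adj x) ⊂ Y := by
    intro x hx
    obtain ⟨-, y, hy, hxy⟩ := (hmemL x).1 hx
    exact Finset.filter_ssubset.2 ⟨y, hy, hxy⟩
  have hdeg : ∀ x ∈ L, ∀ y ∈ Y, ¬H.Adj x y →
      (Y.filter (H.Adj x)).card ≤ (L.filter fun u => ¬H.Adj u y).card := by
    intro x hx y hy hxy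
    obtain ⟨g, hg, hgX, hgx⟩ := hpred x (hLX hx) y hy hxy
    refine Finset.card_le_card_of_injOn g ?_ (hg.mono (Finset.coe_subset.2 (Finset.filter_subset _ _)))
    intro q hq
    simp only [SetLike.mem_coe, Finset.mem_filter] at hq ⊢
    have hq' : ¬H.Adj (g q) y := fun hadj => hgx q hq.1 hq.2 hadj.symm
    exact ⟨hmissL y hy _ (hgX q hq.1).1 hq', hq'⟩
  have htwo : ∀ x ∈ L, 2 ≤ (Y.filter (H.Adj x)).card := by
    intro x hx
    have := hexp _ {x} (hss x hx) (by simpa using hLX hx) (by simp)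
      (fun t ht v hv htv => Finset.mem_filter.2 ⟨hv, Finset.mem_singleton.1 ht ▸ htv⟩)
    rwa [Finset.card_singleton] at this
  have hlt : ∀ x ∈ L, (Y.filter (H.Adj x)).card < L.card := by
    intro x hx
    obtain ⟨-, y, hy, hxy⟩ := (hmemL x).1 hx
    refine lt_of_le_of_ne ((hdeg x hx y hy hxy).trans (Finset.card_filter_le _ _)) fun heq => ?_
    refine (hexp _ L (hss x hx) hLX hLne fun t ht v hv htv => ?_).ne' heq
    refine Finset.mem_filter.2 ⟨hv, by_contra fun hxv => ?_⟩
    have := Finset.filter_card_eq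
      (le_antisymm (Finset.card_filter_le _ _) (heq ▸ hdeg x hx v hv hxv)) t ht
    exact this htv
  have hL3 : L.card = 3 := by
    obtain ⟨x, hx⟩ := hLne
    have := htwo x hx
    have := hlt x hx
    omega
  have hN2 : ∀ x ∈ L, (Y.filter (H.Adj x)).card = 2 := fun x hx => by
    have := htwo x hx
    have := hlt x hx
    omega
  -- a vertex of `Y` with two neighbours in `L` is adjacent to all of `L`
  have hall : ∀ y ∈ Y, ∀ u ∈ L, ∀ v ∈ L, u ≠ v → H.Adj u y → H.Adj v y →
      ∀ w ∈ L, H.Adj w y := by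
    intro y hy u hu v hv huv huy hvy w hw
    by_contra hwy
    have h1 := hdeg w hw y hy hwy
    rw [hN2 w hw] at h1
    have h2 : (L.filter fun u => ¬H.Adj u y) ⊆ (L.erase u).erase v := by
      intro t ht
      simp only [Finset.mem_filter] at ht
      simp only [Finset.mem_erase]
      exact ⟨by rintro rfl; exact ht.2 hvy, by rintro rfl; exact ht.2 huy, ht.1⟩
    have h3 := Finset.card_le_card h2
    rw [Finset.card_erase_of_mem (by simp [hv, huv.symm]), Finset.card_erase_of_mem hu, hL3] at h3
    omega
  obtain ⟨a, haY, haL⟩ : ∃ a ∈ Y, ∀ w ∈ L, H.Adj w a := by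
    by_contra! hcon
    have huniq : ∀ y ∈ Y, ∀ u ∈ L, ∀ v ∈ L, H.Adj u y → H.Adj v y → u = v := by
      intro y hy u hu v hv huy hvy
      by_contra huv
      obtain ⟨w, hw, hwy⟩ := hcon y hy
      exact hwy (hall y hy u hu v hv huv huy hvy w hw)
    obtain ⟨u, hu, v, hv, huv⟩ := Finset.one_lt_card.1 (by omega : 1 < L.card)
    obtain ⟨c, hc⟩ := Finset.card_pos.1 (by rw [hN2 v hv]; norm_num : 0 < (Y.filter (H.Adj v)).card)
    rw [Finset.mem_filter] at hc
    have huc : ¬H.Adj u c := fun huc => huv (huniq c hc.1 u hu v hv huc hc.2)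
    obtain ⟨g, hg, hgX, hgx⟩ := hpred u (hLX hu) c hc.1 huc
    have hgu : ∀ q ∈ Y.filter (H.Adj u), g q = u := by
      intro q hq
      rw [Finset.mem_filter] at hq
      exact huniq q hq.1 _ (hmissL c hc.1 _ (hgX q hq.1).1
        fun h => hgx q hq.1 hq.2 h.symm) u hu (hgX q hq.1).2 hq.2
    obtain ⟨q, hq, r, hr, hqr⟩ := Finset.one_lt_card.1
      (by rw [hN2 u hu]; norm_num : 1 < (Y.filter (H.Adj u)).card)
    exact hqr (hg (Finset.mem_filter.1 hq).1 (Finset.mem_filter.1 hr).1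
      ((hgu q hq).trans (hgu r hr).symm))
  have hb : ∀ w ∈ L, ∃ b, b ≠ a ∧ Y.filter (H.Adj w) = {a, b} := by
    intro w hw
    have ha : a ∈ Y.filter (H.Adj w) := Finset.mem_filter.2 ⟨haY, haL w hw⟩
    obtain ⟨b, hb⟩ := Finset.card_eq_one.1
      (show ((Y.filter (H.Adj w)).erase a).card = 1 by rw [Finset.card_erase_of_mem ha, hN2 w hw])
    refine ⟨b, (Finset.mem_erase.1 (hb ▸ Finset.mem_singleton_self b)).1, ?_⟩
    rw [← hb, Finset.insert_erase ha]
  let e : Fin 3 ≃ L := (L.equivFinOfCardEq hL3).symm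
  choose b hba hNb using fun i => hb (e i) (e i).2
  have hmem : ∀ i v, v ∈ Y ∧ H.Adj (e i) v ↔ v = a ∨ v = b i := by
    intro i v
    rw [← Finset.mem_filter, hNb]
    simp
  have hinj : Function.Injective fun i => (e i : V) := fun i j hij => e.injective (Subtype.ext hij)
  refine ⟨fun i => e i, b, a, hinj, ?_, fun i => hLX (e i).2, haY,
    fun i => ((hmem i _).2 (Or.inr rfl)).1, hba, ?_⟩
  · intro i j hij
    by_contra hne
    have hbi := (hmem i (b i)).2 (Or.inr rfl)
    have hbj := (hmem j (b i)).2 (Or.inr hij)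
    have hbL := hall (b i) hbi.1 _ (e i).2 _ (e j).2 (fun h => hne (hinj h)) hbi.2 hbj.2
    have := hexp _ L (hss _ (e i).2) hLX hLne fun t ht v hv htv => by
      obtain ⟨k, hk⟩ := e.surjective ⟨t, ht⟩
      have hk' : (e k : V) = t := congrArg Subtype.val hk
      have hbk := (hmem k (b i)).1 ⟨hbi.1, hbL _ (e k).2⟩
      have hv' := (hmem k v).1 ⟨hv, hk' ▸ htv⟩
      rw [hNb]
      simp only [Finset.mem_insert, Finset.mem_singleton]
      rcases hv' with rfl | rfl
      · exact Or.inl rfl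
      · exact Or.inr (hbk.resolve_left (hba i)).symm
    rw [hN2 _ (e i).2, hL3] at this
    omega
  · intro u hu v hv
    by_cases huL : u ∈ L
    · obtain ⟨i, hi⟩ := e.surjective ⟨u, huL⟩
      have hi' : u = e i := congrArg Subtype.val hi.symm
      have h1 := hmem i v
      rw [← hi'] at h1
      constructor
      · intro huv
        exact Or.inr ((h1.1 ⟨hv, huv⟩).imp_right fun h => ⟨i, hi', h⟩)
      · rintro (h | h | ⟨j, hj, hvj⟩)
        · exact (h i hi').elim
        · exact (h1.2 (Or.inl h)).2
        · have : j = i := hinj (hj.symm.trans hi')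
          exact (h1.2 (Or.inr (this ▸ hvj))).2
    · refine iff_of_true (by_contra fun h => huL (hmissL v hv u hu h)) (Or.inl ?_)
      rintro i rfl
      exact huL (e i).2

end Structure

section Counting

variable {V : Type*} {H : SimpleGraph V} [DecidableRel H.Adj] {X Y : Finset V} {n : ℕ}

/-- The vertices of `Y` not adjacent to `x`. -/
def missing (H : SimpleGraph V) [DecidableRel H.Adj] (Y : Finset V) (x : V) : Finset V :=
  Y.filter fun y => ¬H.Adj x y

lemma mem_missing {x y : V} : y ∈ missing H Y x ↔ y ∈ Y ∧ ¬H.Adj x y := Finset.mem_filter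

lemma sum_card_missing_comm (X Y : Finset V) :
    ∑ x ∈ X, (missing H Y x).card = ∑ y ∈ Y, (missing H X y).card := by
  have := Finset.sum_card_bipartiteAbove_eq_sum_card_bipartiteBelow (s := X) (t := Y)
    (fun x y => ¬H.Adj x y)
  simp only [Finset.bipartiteAbove, Finset.bipartiteBelow] at this
  simp only [missing]
  rw [this]
  simp only [H.adj_comm]

lemma card_missing_le_or_le (hn : 16 ≤ n)
    (hdeg : ∀ x ∈ X, ∀ y ∈ Y, ¬H.Adj x y → n ≤ (missing H Y x).card + (missing H X y).card)
    (hM : ∑ y ∈ Y, (missing H X y).card < 3 * n) {x : V} (hx : x ∈ X) :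
    (missing H Y x).card ≤ 3 ∨ n ≤ (missing H Y x).card + 3 := by
  by_contra! h
  obtain ⟨q, hq⟩ := Nat.exists_eq_add_of_le (by omega : (missing H Y x).card ≤ n)
  have h1 : (missing H Y x).card * q ≤ ∑ y ∈ Y, (missing H X y).card := by
    refine le_trans ?_ (Finset.sum_le_sum_of_subset
      (Finset.filter_subset (fun y => ¬H.Adj x y) Y))
    refine Finset.card_nsmul_le_sum (missing H Y x) _ _ fun y hy => ?_
    have := hdeg x hx y (mem_missing.1 hy).1 (mem_missing.1 hy).2
    omega
  obtain ⟨s, hs⟩ := Nat.exists_eq_add_of_le (by omega : 4 ≤ (missing H Y x).card)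
  obtain ⟨t, rfl⟩ := Nat.exists_eq_add_of_le (by omega : 4 ≤ q)
  rw [hs] at h1
  nlinarith

/-- The vertices of `X` missing at least `n - 3` vertices of `Y`. -/
def largelyMissing (H : SimpleGraph V) [DecidableRel H.Adj] (n : ℕ) (X Y : Finset V) : Finset V :=
  X.filter fun x => n ≤ (missing H Y x).card + 3

lemma mem_largelyMissing {x : V} :
    x ∈ largelyMissing H n X Y ↔ x ∈ X ∧ n ≤ (missing H Y x).card + 3 := Finset.mem_filter

lemma sum_card_missing_largelyMissing :
    (largelyMissing H n X Y).card * (n - 3) ≤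
      ∑ x ∈ largelyMissing H n X Y, (missing H Y x).card :=
  Finset.card_nsmul_le_sum _ _ _ fun x hx => by
    have := (mem_largelyMissing.1 hx).2
    omega

lemma card_largelyMissing_le_three (hn : 16 ≤ n)
    (hM : ∑ x ∈ X, (missing H Y x).card < 3 * n) : (largelyMissing H n X Y).card ≤ 3 := by
  have h1 := (sum_card_missing_largelyMissing (H := H) (n := n) (X := X) (Y := Y)).trans
    (Finset.sum_le_sum_of_subset (Finset.filter_subset _ _))
  by_contra! h
  have h2 : 4 * (n - 3) ≤ (largelyMissing H n X Y).card * (n - 3) := Nat.mul_le_mul_right _ h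
  omega

lemma card_largelyMissing_add_le [DecidableEq V] (hn : 16 ≤ n)
    (hM : ∑ x ∈ X, (missing H Y x).card < 3 * n) :
    (largelyMissing H n X Y).card + (largelyMissing H n Y X).card ≤ 3 := by
  have ha := card_largelyMissing_le_three hn hM
  have hb := card_largelyMissing_le_three hn (sum_card_missing_comm (H := H) X Y ▸ hM)
  set A := largelyMissing H n X Y with hA
  set B := largelyMissing H n Y X with hB
  have hAX : A ⊆ X := Finset.filter_subset _ _
  have hBY : B ⊆ Y := Finset.filter_subset _ _
  have h1 : A.card * (n - 3) ≤ ∑ x ∈ A, (missing H Y x).card := sum_card_missing_largelyMissing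
  have h2 : B.card * (n - 3 - A.card) ≤ ∑ x ∈ X \ A, (missing H Y x).card := calc
    _ ≤ ∑ y ∈ B, (missing H (X \ A) y).card := by
      refine Finset.card_nsmul_le_sum _ _ _ fun y hy => ?_
      have hy := (mem_largelyMissing.1 hy).2
      have : (missing H X y).card ≤ (missing H (X \ A) y).card + A.card := by
        refine le_trans (Finset.card_le_card fun x hx => ?_) (Finset.card_union_le _ _)
        rw [Finset.mem_union, mem_missing, Finset.mem_sdiff]
        rw [mem_missing] at hx
        tauto
      omega
    _ = ∑ x ∈ X \ A, (missing H B x).card := sum_card_missing_comm _ _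
    _ ≤ _ := Finset.sum_le_sum fun x _ => Finset.card_le_card (Finset.filter_subset_filter _ hBY)
  have h3 := Finset.sum_sdiff (f := fun x => (missing H Y x).card) hAX
  generalize A.card = a at *
  generalize B.card = b at *
  interval_cases a <;> interval_cases b <;> omega

lemma two_le_card_largelyMissing (hn : 16 ≤ n)
    (hdeg : ∀ x ∈ X, ∀ y ∈ Y, ¬H.Adj x y → n ≤ (missing H Y x).card + (missing H X y).card)
    (hmin : ∀ x ∈ X, (missing H Y x).card + 2 ≤ n)
    (hM : ∑ x ∈ X, (missing H Y x).card < 3 * n) (h : (largelyMissing H n X Y).Nonempty) :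
    2 ≤ (largelyMissing H n X Y).card := by
  obtain ⟨x, hx⟩ := h
  rw [mem_largelyMissing] at hx
  have hM' := sum_card_missing_comm (H := H) X Y ▸ hM
  have hb := card_largelyMissing_le_three hn hM'
  obtain ⟨y, hy, hyL⟩ := Finset.exists_mem_notMem_of_card_lt_card
    (by omega : (largelyMissing H n Y X).card < (missing H Y x).card)
  rw [mem_missing] at hy
  have hdeg' : ∀ y ∈ Y, ∀ x ∈ X, ¬H.Adj y x →
      n ≤ (missing H X y).card + (missing H Y x).card := fun y hy x hx hyx => by
    rw [add_comm]
    exact hdeg x hx y hy fun h => hyx h.symm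
  have hy3 : (missing H X y).card ≤ 3 := (card_missing_le_or_le hn hdeg' hM hy.1).resolve_right
    fun h => hyL (mem_largelyMissing.2 ⟨hy.1, h⟩)
  have h2 := hdeg x hx.1 y hy.1 hy.2
  have h3 := hmin x hx.1
  refine le_trans (by omega : 2 ≤ (missing H X y).card) (Finset.card_le_card fun u hu => ?_)
  rw [mem_missing] at hu
  have := hdeg u hu.1 y hy.1 fun h => hu.2 h.symm
  exact mem_largelyMissing.2 ⟨hu.1, by omega⟩

lemma card_filter_exists_not_adj_le_three (hn : 16 ≤ n)
    (hdeg : ∀ x ∈ X, ∀ y ∈ Y, ¬H.Adj x y → n ≤ (missing H Y x).card + (missing H X y).card)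
    (hM : ∑ x ∈ X, (missing H Y x).card < 3 * n) (h : largelyMissing H n Y X = ∅) :
    (X.filter fun x => ∃ y ∈ Y, ¬H.Adj x y).card ≤ 3 := by
  refine le_trans (Finset.card_le_card fun x hx => ?_) (card_largelyMissing_le_three hn hM)
  obtain ⟨hx, y, hy, hxy⟩ := Finset.mem_filter.1 hx
  have hdeg' : ∀ y ∈ Y, ∀ x ∈ X, ¬H.Adj y x →
      n ≤ (missing H X y).card + (missing H Y x).card := fun y hy x hx hyx => by
    rw [add_comm]
    exact hdeg x hx y hy fun h => hyx h.symm
  have hy3 := (card_missing_le_or_le hn hdeg' hM hy).resolve_right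
    fun h' => Finset.notMem_empty y (h ▸ mem_largelyMissing.2 ⟨hy, h'⟩)
  have := hdeg x hx y hy hxy
  exact mem_largelyMissing.2 ⟨hx, by omega⟩

lemma HasPredecessors.le_card_missing_add (hpred : HasPredecessors H X Y) (hY : Y.card = n) :
    ∀ x ∈ X, ∀ y ∈ Y, ¬H.Adj x y → n ≤ (missing H Y x).card + (missing H X y).card := by
  intro x hx y hy hxy
  obtain ⟨g, hg, hgX, hgx⟩ := hpred x hx y hy hxy
  have h1 : (Y.filter (H.Adj x)).card ≤ (missing H X y).card := by
    refine Finset.card_le_card_of_injOn g ?_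
      (hg.mono (Finset.coe_subset.2 (Finset.filter_subset _ _)))
    intro q hq
    simp only [SetLike.mem_coe, Finset.mem_filter, mem_missing] at hq ⊢
    exact ⟨(hgX q hq.1).1, hgx q hq.1 hq.2⟩
  have h2 := Finset.card_filter_add_card_filter_not (s := Y) (H.Adj x)
  simp only [missing] at h1 ⊢
  omega

lemma ExpandsInto.card_missing_add_two_le (hexp : ExpandsInto H X Y) (hY : Y.card = n)
    (hn : 2 ≤ n) : ∀ x ∈ X, (missing H Y x).card + 2 ≤ n := by
  intro x hx
  have h2 := Finset.card_filter_add_card_filter_not (s := Y) (H.Adj x)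
  rcases Finset.eq_empty_or_nonempty (missing H Y x) with h0 | ⟨y, hy⟩
  · simp [h0, hn]
  · have := hexp (Y.filter (H.Adj x)) {x}
      (Finset.filter_ssubset.2 ⟨y, (mem_missing.1 hy).1, (mem_missing.1 hy).2⟩)
      (by simpa using hx) (by simp)
      (fun t ht v hv htv => Finset.mem_filter.2 ⟨hv, Finset.mem_singleton.1 ht ▸ htv⟩)
    rw [Finset.card_singleton] at this
    simp only [missing]
    omega

/-- With fewer than `3 * n` missing pairs, the only obstruction is the pattern of `Gnn`. -/
lemma hasGnnPattern_of_sum_card_missing_lt [DecidableEq V] (hn : 16 ≤ n)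
    (hX : X.card = n) (hY : Y.card = n)
    (hpred : HasPredecessors H X Y) (hpred' : HasPredecessors H Y X)
    (hexp : ExpandsInto H X Y) (hexp' : ExpandsInto H Y X)
    (hM : ∑ x ∈ X, (missing H Y x).card < 3 * n)
    (hne : ∃ x ∈ X, ∃ y ∈ Y, ¬H.Adj x y) : HasGnnPattern H X Y ∨ HasGnnPattern H Y X := by
  have hM' := sum_card_missing_comm (H := H) X Y ▸ hM
  have hdeg := hpred.le_card_missing_add hY
  have hdeg' := hpred'.le_card_missing_add hX
  have hadd := card_largelyMissing_add_le hn hM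
  rcases Finset.eq_empty_or_nonempty (largelyMissing H n Y X) with h | h
  · exact Or.inl (hasGnnPattern_of_card_le_three hpred hexp
      (card_filter_exists_not_adj_le_three hn hdeg hM h) hne)
  · rcases Finset.eq_empty_or_nonempty (largelyMissing H n X Y) with h' | h'
    · obtain ⟨x, hx, y, hy, hxy⟩ := hne
      exact Or.inr (hasGnnPattern_of_card_le_three hpred' hexp'
        (card_filter_exists_not_adj_le_three hn hdeg' hM' h')
        ⟨y, hy, x, hx, fun h => hxy h.symm⟩)
    · have := two_le_card_largelyMissing hn hdeg
        (hexp.card_missing_add_two_le hY (by omega)) hM h'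
      have := two_le_card_largelyMissing hn hdeg'
        (hexp'.card_missing_add_two_le hX (by omega)) hM' h
      omega

end Counting

section Closure

variable {V : Type*} {G H : SimpleGraph V}

lemma IsBipartition.sup_edge {X Y : Set V} (h : IsBipartition H X Y) {x y : V} (hx : x ∈ X)
    (hy : y ∈ Y) : IsBipartition (H ⊔ edge x y) X Y := by
  refine ⟨h.1, h.2.1, fun u v huv => ?_⟩
  rw [sup_adj, edge_adj] at huv
  rcases huv with huv | ⟨⟨rfl, rfl⟩ | ⟨rfl, rfl⟩, -⟩
  · exact h.2.2 huv
  · exact Or.inl ⟨hx, hy⟩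
  · exact Or.inr ⟨hy, hx⟩

lemma expandsInto_of_bTough1 [Finite V] {X Y : Finset V} (ht : BTough1 G X Y)
    (hGH : G ≤ H) (hbip : IsBipartition H (X : Set V) Y) : ExpandsInto H X Y := by
  intro S T hS hT hT0 hN
  have := ht.ncard_lt_ncard hbip.2.1 (S := S) (T := T) (Finset.coe_ssubset.2 hS)
    (Finset.coe_subset.2 hT) (Finset.coe_nonempty.2 hT0) fun t htT v htv =>
      hN t htT v (hbip.mem_right (hT htT) (hGH htv)) (hGH htv)
  simpa using this

variable [Fintype V] [DecidableEq V]

lemma hasPredecessors_of_isHamiltonian_sup_edge {X Y : Finset V} (hcard : 3 ≤ Fintype.card V)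
    (hbip : IsBipartition H (X : Set V) Y) (hH : ¬H.IsHamiltonian)
    (hmax : ∀ x ∈ X, ∀ y ∈ Y, ¬H.Adj x y → (H ⊔ edge x y).IsHamiltonian) :
    HasPredecessors H X Y := by
  intro x hx y hy hxy
  have hne : ∀ q ∈ Y, q ≠ x := fun q hq => (hbip.2.1.ne_of_mem hx hq).symm
  obtain ⟨p, hp⟩ := exists_isHamiltonian_walk_of_sup_edge (hne y hy).symm hH (hmax x hx y hy hxy)
  obtain ⟨g, hg, hadj, hnadj⟩ := hp.exists_predecessor hH hcard
  refine ⟨g, hg.mono fun q hq => hne q hq, fun q hq => ⟨?_, hadj q (hne q hq)⟩,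
    fun q hq => hnadj q (hne q hq)⟩
  exact hbip.symm.mem_right hq (hadj q (hne q hq)).symm

/-- A bipartite graph whose spectral radius is at least that of `Gnn` has fewer than `3 * n` missing
pairs. -/
lemma sum_card_missing_lt_of_specRad_le {n : ℕ} (hn : 4 ≤ n) [Nonempty V] [DecidableRel G.Adj]
    {X Y : Finset V} (hbip : IsBipartition G (X : Set V) Y) (hX : X.card = n) (hY : Y.card = n)
    (hrho : specRad (Gnn n) ≤ specRad G) :
    ∑ x ∈ X, (missing G Y x).card < 3 * n := by
  have hFin : Nonempty (Fin n ⊕ Fin n) := ⟨Sum.inl ⟨0, by omega⟩⟩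
  have h1 := lt_sq_specRad_Gnn hn
  have h2 := sq_specRad_le_sum_card hbip
  have h3 : specRad (Gnn n) ^ 2 ≤ specRad G ^ 2 := pow_le_pow_left₀ (specRad_nonneg _) hrho 2
  have h4 : ∑ x ∈ X, (Y.filter (G.Adj x)).card + ∑ x ∈ X, (missing G Y x).card = n * n := by
    simp only [missing]
    rw [← Finset.sum_add_distrib, Finset.sum_congr rfl fun x _ =>
      Finset.card_filter_add_card_filter_not (s := Y) (G.Adj x)]
    simp [hX, hY]
  have h5 : ((∑ x ∈ X, (Y.filter (G.Adj x)).card : ℕ) : ℝ) +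
      (∑ x ∈ X, (missing G Y x).card : ℕ) = n * n := by exact_mod_cast h4
  have h6 : ((∑ x ∈ X, (missing G Y x).card : ℕ) : ℝ) < (3 * n : ℕ) := by
    push_cast at *
    linarith
  exact_mod_cast h6

end Closure

/-- A 1-tough balanced bipartite graph of order `2n` (`n ≥ 16`) with
`ρ(G) ≥ ρ(G_{n,n})` contains a Hamilton cycle, unless `G ≅ G_{n,n}`. -/
theorem stmt0 {V : Type*} [Fintype V] [DecidableEq V] (n : ℕ) (hn : 16 ≤ n)
    (G : SimpleGraph V) (X Y : Set V)
    (hbip : IsBipartition G X Y) (hX : X.ncard = n) (hY : Y.ncard = n)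
    (htough : BTough1 G X Y)
    (hrho : specRad (Gnn n) ≤ specRad G) :
    G.IsHamiltonian ∨ Nonempty (G ≃g Gnn n) := by
  classical
  obtain ⟨X, rfl⟩ := X.toFinite.exists_finset_coe
  obtain ⟨Y, rfl⟩ := Y.toFinite.exists_finset_coe
  rw [Set.ncard_coe_finset] at hX hY
  refine or_iff_not_imp_left.2 fun hG => ?_
  obtain ⟨H, hGH, ⟨hHbip, hH⟩, hmax⟩ := Finite.exists_le_maximal
    (p := fun H : SimpleGraph V => IsBipartition H (X : Set V) Y ∧ ¬H.IsHamiltonian) ⟨hbip, hG⟩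
  have hcard : 3 ≤ Fintype.card V := by
    have := Finset.card_le_univ X
    omega
  have hV : Nonempty V := Fintype.card_pos_iff.1 (by omega)
  have hclosed : ∀ x ∈ X, ∀ y ∈ Y, ¬H.Adj x y → (H ⊔ edge x y).IsHamiltonian := by
    intro x hx y hy hxy
    by_contra hnot
    have hne : x ≠ y := hHbip.2.1.ne_of_mem hx hy
    exact hxy (hmax ⟨hHbip.sup_edge hx hy, hnot⟩ le_sup_left
      (Or.inr ((edge_adj x y x y).2 ⟨Or.inl ⟨rfl, rfl⟩, hne⟩)))
  have hM : ∑ x ∈ X, (missing H Y x).card < 3 * n := by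
    refine lt_of_le_of_lt (Finset.sum_le_sum fun x _ => Finset.card_le_card fun y hy => ?_)
      (sum_card_missing_lt_of_specRad_le (by omega) hbip hX hY hrho)
    rw [mem_missing] at hy ⊢
    exact ⟨hy.1, fun h => hy.2 (hGH h)⟩
  have hne : ∃ x ∈ X, ∃ y ∈ Y, ¬H.Adj x y := by
    by_contra! hcon
    exact hH (isHamiltonian_of_complete_bipartite (Finset.disjoint_coe.1 hHbip.2.1)
      hHbip.mem_or_mem (hX.trans hY.symm) hcard hcon)
  have hiso : Nonempty (H ≃g Gnn n) := by
    rcases hasGnnPattern_of_sum_card_missing_lt hn hX hY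
      (hasPredecessors_of_isHamiltonian_sup_edge hcard hHbip hH hclosed)
      (hasPredecessors_of_isHamiltonian_sup_edge hcard hHbip.symm hH fun y hy x hx hyx => by
        rw [edge_comm]
        exact hclosed x hx y hy fun h => hyx h.symm)
      (expandsInto_of_bTough1 htough hGH hHbip)
      (expandsInto_of_bTough1 htough.symm hGH hHbip.symm) hM hne with h | h
    · exact h.nonempty_iso (by omega) hHbip hX hY
    · exact h.nonempty_iso (by omega) hHbip.symm hY hX
  obtain ⟨e⟩ := hiso
  have hconn : H.Preconnected := e.preconnected_iff.2 (Gnn_preconnected (by omega))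
  have hGH' : G = H := eq_of_le_of_specRad_le hGH hconn ((specRad_le_of_iso e).trans hrho)
  exact ⟨hGH' ▸ e⟩
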